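/- arXiv:1601.07228 — 7 statements merged into one kernel-verified Lean document; each statement's English description precedes it below -/
import Mathlib

section
/- Fix a real number c > 0 and a positive integer m with c·(m+1) ≤ 1. For a positive integer u, let Q_u denote the set of probability vectors q = (q_1, …, q_u) (q_i ≥ 0, ∑_i q_i = 1) satisfying q_i ≥ c for all i ∈ {1, …, u}. Then the minimum of the entropy H over Q_m is at most the minimum of H over Q_{m+1}; that is, min_{q ∈ Q_m} H(q) ≤ min_{q ∈ Q_{m+1}} H(q) (both minima exist since each Q_u is a nonempty compact set and H is continuous on it). -/
/-- Entropy in bits of a probability vector `q : Fin u → ℝ`,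
with the convention `0 * log₂ 0 = 0` (note `Real.logb 2 0 = 0`). -/
noncomputable def entropyBits {u : ℕ} (q : Fin u → ℝ) : ℝ :=
  -∑ i, q i * Real.logb 2 (q i)

/-- The set of probability vectors of length `u` all of whose components are at least `c`. -/
def Qset (c : ℝ) (u : ℕ) : Set (Fin u → ℝ) :=
  {q | (∀ i, 0 ≤ q i) ∧ (∑ i, q i) = 1 ∧ (∀ i, c ≤ q i)}

/-!
Merging coordinates of a probability vector does not increase its entropy: if `x i` is one of the
masses being merged and `S` is their total, then `x i * log (x i) ≤ x i * log S`, and summing over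
`i` gives superadditivity of `x ↦ x * log x`. Merging keeps every coordinate at least `c` as long as
no fiber of the merging map is empty, so each vector in `Q_{m+1}` yields, by merging two of its
coordinates, a vector in `Q_m` of no larger entropy.
-/

theorem sum_mul_logb_le_sum_mul_logb_sum {ι : Type*} {b : ℝ} (hb : 1 < b) (s : Finset ι)
    {x : ι → ℝ} (hx : ∀ i ∈ s, 0 ≤ x i) :
    ∑ i ∈ s, x i * Real.logb b (x i) ≤ (∑ i ∈ s, x i) * Real.logb b (∑ i ∈ s, x i) := by
  rw [Finset.sum_mul]
  refine Finset.sum_le_sum fun i hi => ?_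
  obtain hzero | hpos := (hx i hi).eq_or_lt
  · simp [← hzero]
  · have hle : x i ≤ ∑ j ∈ s, x j := Finset.single_le_sum hx hi
    exact mul_le_mul_of_nonneg_left (Real.logb_le_logb_of_le hb hpos hle) hpos.le

section

variable {c : ℝ} {u v : ℕ} {q : Fin u → ℝ}

theorem entropyBits_map_le (f : Fin u → Fin v) (hq : ∀ i, 0 ≤ q i) :
    entropyBits (FunOnFinite.map f q) ≤ entropyBits q := by
  refine neg_le_neg ?_
  calc ∑ i, q i * Real.logb 2 (q i)
      = ∑ j, ∑ i with f i = j, q i * Real.logb 2 (q i) := (Finset.sum_fiberwise _ f _).symm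
    _ ≤ ∑ j, (∑ i with f i = j, q i) * Real.logb 2 (∑ i with f i = j, q i) :=
      Finset.sum_le_sum fun j _ =>
        sum_mul_logb_le_sum_mul_logb_sum one_lt_two _ fun i _ => hq i
    _ = ∑ j, FunOnFinite.map f q j * Real.logb 2 (FunOnFinite.map f q j) := by
      simp only [FunOnFinite.map_apply_apply]

theorem entropyBits_nonneg (hq₀ : ∀ i, 0 ≤ q i) (hq₁ : ∀ i, q i ≤ 1) : 0 ≤ entropyBits q :=
  neg_nonneg.2 <| Finset.sum_nonpos fun i _ =>
    mul_nonpos_of_nonneg_of_nonpos (hq₀ i) (Real.logb_nonpos one_lt_two (hq₀ i) (hq₁ i))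

theorem bddBelow_entropyBits_image_Qset (c : ℝ) (u : ℕ) :
    BddBelow (entropyBits '' Qset c u) := by
  refine ⟨0, ?_⟩
  rintro _ ⟨q, ⟨hnonneg, hsum, -⟩, rfl⟩
  refine entropyBits_nonneg hnonneg fun i => ?_
  rw [← hsum]
  exact Finset.single_le_sum (fun j _ => hnonneg j) (Finset.mem_univ i)

theorem map_mem_Qset {f : Fin u → Fin v} (hf : Function.Surjective f) (hq : q ∈ Qset c u) :
    FunOnFinite.map f q ∈ Qset c v := by
  obtain ⟨hnonneg, hsum, hlower⟩ := hq
  simp only [Qset, Set.mem_ofPred_eq, FunOnFinite.map_apply_apply]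
  refine ⟨fun j => Finset.sum_nonneg fun i _ => hnonneg i, ?_, fun j => ?_⟩
  · rw [Finset.sum_fiberwise, hsum]
  · obtain ⟨i, hi⟩ := hf j
    calc c ≤ q i := hlower i
      _ ≤ ∑ k with f k = j, q k :=
        Finset.single_le_sum (fun k _ => hnonneg k) (by simp [hi])

theorem Qset_nonempty (hu : u ≠ 0) (hcu : c * u ≤ 1) : (Qset c u).Nonempty := by
  have hpos : (0 : ℝ) < u := by positivity
  refine ⟨fun _ => (u : ℝ)⁻¹, fun _ => by positivity, by simp [hu], fun _ => ?_⟩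
  rwa [← one_div, le_div_iff₀ hpos]

theorem sInf_entropyBits_image_Qset_le_of_surjective {f : Fin u → Fin v}
    (hf : Function.Surjective f) (hne : (Qset c u).Nonempty) :
    sInf (entropyBits '' Qset c v) ≤ sInf (entropyBits '' Qset c u) := by
  refine le_csInf (hne.image _) ?_
  rintro _ ⟨q, hq, rfl⟩
  calc sInf (entropyBits '' Qset c v)
      ≤ entropyBits (FunOnFinite.map f q) :=
        csInf_le (bddBelow_entropyBits_image_Qset c v)
          (Set.mem_image_of_mem _ (map_mem_Qset hf hq))
    _ ≤ entropyBits q := entropyBits_map_le f hq.1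

end

theorem min_entropy_mono (c : ℝ) (hc : 0 < c) (m : ℕ) (hm : 1 ≤ m)
    (hcm : c * (m + 1) ≤ 1) :
    sInf (entropyBits '' Qset c m) ≤ sInf (entropyBits '' Qset c (m + 1)) := by
  have hne : (Qset c (m + 1)).Nonempty := Qset_nonempty m.succ_ne_zero (by exact_mod_cast hcm)
  have hmerge : Function.Surjective (Fin.predAbove (⟨0, hm⟩ : Fin m)) :=
    Fin.predAbove_surjective _
  exact sInf_entropyBits_image_Qset_le_of_surjective hmerge hne
end

section
/- Fix a real number c > 0 and an integer m ≥ 1 with c·(m+1) ≤ 1. If q = (q_1, …, q_{m+1}) is a probability vector with q_i > c (strictly) for every i ∈ {1, …, m+1}, then q does not minimize entropy among probability vectors with all components at least c: there exists a probability vector q' = (q'_1, …, q'_{m+1}) with q'_i ≥ c for all i and H(q') < H(q). -/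
/-!
Entropy is strictly concave on the nonnegative orthant. If two coordinates of `q` exceed their
lower bounds, a little mass can be moved between them in either direction, so `q` is the midpoint
of `q - v` and `q + v`, both still admissible. One of these two has smaller entropy than `q`.
-/

theorem strictConvexOn_pi_sum {𝕜 β ι : Type*} {E : ι → Type*} [Semiring 𝕜] [PartialOrder 𝕜]
    [Fintype ι] [∀ i, AddCommMonoid (E i)] [∀ i, Module 𝕜 (E i)]
    [AddCommMonoid β] [PartialOrder β] [IsOrderedCancelAddMonoid β] [Module 𝕜 β]
    {s : ∀ i, Set (E i)} {f : ∀ i, E i → β} (hf : ∀ i, StrictConvexOn 𝕜 (s i) (f i)) :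
    StrictConvexOn 𝕜 (Set.univ.pi s) fun x => ∑ i, f i (x i) := by
  refine ⟨convex_pi fun i _ => (hf i).1, fun x hx y hy hxy a b ha hb hab => ?_⟩
  obtain ⟨j, hj⟩ := Function.ne_iff.mp hxy
  have coord_le (i : ι) : f i (a • x i + b • y i) ≤ a • f i (x i) + b • f i (y i) :=
    (hf i).convexOn.2 (hx i trivial) (hy i trivial) ha.le hb.le hab
  have coord_lt : f j (a • x j + b • y j) < a • f j (x j) + b • f j (y j) :=
    (hf j).2 (hx j trivial) (hy j trivial) hj ha hb hab
  simpa only [Pi.add_apply, Pi.smul_apply, Finset.smul_sum, Finset.sum_add_distrib] using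
    Finset.sum_lt_sum (fun i _ => coord_le i) ⟨j, Finset.mem_univ j, coord_lt⟩

theorem strictConvexOn_mul_logb {b : ℝ} (hb : 1 < b) :
    StrictConvexOn ℝ (Set.Ici 0) fun x => x * Real.logb b x := by
  refine ⟨convex_Ici 0, fun x hx y hy hxy s t hs ht hst => ?_⟩
  have h := div_lt_div_of_pos_right (Real.strictConvexOn_mul_log.2 hx hy hxy hs ht hst)
    (Real.log_pos hb)
  simpa only [Real.logb, smul_eq_mul, add_div, mul_div_assoc] using h

theorem strictConcaveOn_entropyBits {u : ℕ} :
    StrictConcaveOn ℝ (Set.Ici 0) (entropyBits (u := u)) := by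
  have h := (strictConvexOn_pi_sum fun _ : Fin u => strictConvexOn_mul_logb one_lt_two).neg
  rwa [Set.pi_univ_Ici] at h

theorem map_sub_lt_or_map_add_lt_of_strictConcaveOn {𝕜 E β : Type*} [Field 𝕜] [LinearOrder 𝕜]
    [IsStrictOrderedRing 𝕜] [AddCommGroup E] [Module 𝕜 E] [AddCommMonoid β] [LinearOrder β]
    [IsOrderedAddMonoid β] [Module 𝕜 β] [PosSMulStrictMono 𝕜 β]
    {s : Set E} {f : E → β} {x v : E} (hf : StrictConcaveOn 𝕜 s f)
    (hv : v ≠ 0) (hsub : x - v ∈ s) (hadd : x + v ∈ s) :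
    f (x - v) < f x ∨ f (x + v) < f x := by
  have : IsAddTorsionFree E := .of_isTorsionFree 𝕜 E
  have hne : x - v ≠ x + v := by
    simpa only [sub_eq_add_neg, ne_eq, add_right_inj] using neg_ne_self.mpr hv
  exact min_lt_iff.mp (hf.lt_on_openSegment hsub hadd hne (mem_openSegment_sub_add x v))

theorem exists_ne_zero_sum_eq_zero_abs_le {ι α : Type*} [Fintype ι] [AddCommGroup α]
    [LinearOrder α] [IsOrderedAddMonoid α] {g : ι → α} (hg : 0 ≤ g) {i j : ι} (hij : i ≠ j)
    (hi : 0 < g i) (hj : 0 < g j) :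
    ∃ v : ι → α, v ≠ 0 ∧ ∑ k, v k = 0 ∧ |v| ≤ g := by
  classical
  set ε := min (g i) (g j)
  have hε : 0 < ε := lt_min hi hj
  refine ⟨Pi.single i ε - Pi.single j ε, fun h => ?_, by simp, fun k => ?_⟩
  · simpa [hij, hε.ne'] using congrFun h i
  · obtain rfl | hki := eq_or_ne k i
    · simp [hij, abs_of_pos hε, ε]
    obtain rfl | hkj := eq_or_ne k j
    · simp [hki, abs_of_pos hε, ε]
    · simpa [hki, hkj] using hg k

theorem strict_interior_not_min_general {u : ℕ} {l q : Fin u → ℝ} (hl : 0 ≤ l) (hlq : l ≤ q)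
    {i j : Fin u} (hij : i ≠ j) (hi : l i < q i) (hj : l j < q j) :
    ∃ q' : Fin u → ℝ, ∑ k, q' k = ∑ k, q k ∧ l ≤ q' ∧ entropyBits q' < entropyBits q := by
  obtain ⟨v, hv, hsum, habs⟩ := exists_ne_zero_sum_eq_zero_abs_le (sub_nonneg.mpr hlq) hij
    (sub_pos.mpr hi) (sub_pos.mpr hj)
  have hsub : l ≤ q - v := le_sub_comm.mp ((le_abs_self v).trans habs)
  have hadd : l ≤ q + v := by simpa using le_sub_comm.mp ((neg_le_abs v).trans habs)
  obtain h | h := map_sub_lt_or_map_add_lt_of_strictConcaveOn strictConcaveOn_entropyBits hv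
    (hl.trans hsub) (hl.trans hadd)
  · exact ⟨q - v, by simp [hsum], hsub, h⟩
  · exact ⟨q + v, by simp [Finset.sum_add_distrib, hsum], hadd, h⟩

theorem strict_interior_not_min (c : ℝ) (hc : 0 < c) (m : ℕ) (hm : 1 ≤ m)
    (hcm : c * (m + 1) ≤ 1) (q : Fin (m + 1) → ℝ)
    (hq0 : ∀ i, 0 ≤ q i) (hq1 : (∑ i, q i) = 1) (hqc : ∀ i, c < q i) :
    ∃ q' : Fin (m + 1) → ℝ,
      (∀ i, 0 ≤ q' i) ∧ (∑ i, q' i) = 1 ∧ (∀ i, c ≤ q' i) ∧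
      entropyBits q' < entropyBits q := by
  have : Nontrivial (Fin (m + 1)) := Fin.nontrivial_iff_two_le.mpr (Nat.succ_le_succ hm)
  obtain ⟨i, j, hij⟩ := exists_pair_ne (Fin (m + 1))
  obtain ⟨q', hsum, hge, hlt⟩ := strict_interior_not_min_general (l := fun _ => c)
    (fun _ => hc.le) (fun k => (hqc k).le) hij (hqc i) (hqc j)
  exact ⟨q', fun i => hc.le.trans (hge i), hsum.trans hq1, hge, hlt⟩
end

section
/- Let p ∈ conv(P) with p ≠ p*. Let i = min{k : p*(k) ≠ p(k)} and j = max{k : p*(k) ≠ p(k)}. Then p*(i) > p(i) and p*(j) < p(j). -/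
open Finset

/-- The clumpy distribution `p*`: with `M = ∑ j, n j`, `p* = (1/M) ∑ j, e_j*`, where
`e_j*` is the 0–1 vector whose first `n j` coordinates are 1 and the rest 0. -/
noncomputable def pstar (L : ℕ) (n : Fin L → ℕ) : Fin L → ℝ :=
  fun i => (1 / (∑ j, n j : ℝ)) * ∑ j, (if (i : ℕ) < n j then (1 : ℝ) else 0)

/-- The set `P` of vectors `p = (1/M) ∑ j, e_j`, where each `e_j ∈ {0,1}^L` has
exactly `n j` coordinates equal to 1. -/
def Pset (L : ℕ) (n : Fin L → ℕ) : Set (Fin L → ℝ) :=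
  {p | ∃ e : Fin L → Fin L → ℝ,
    (∀ j i, e j i = 0 ∨ e j i = 1) ∧
    (∀ j, (∑ i, e j i) = (n j : ℝ)) ∧
    p = fun i => (1 / (∑ j, n j : ℝ)) * ∑ j, e j i}

/-!
On every initial segment `S` the vector `e_j*` attains the largest sum, `min |S| (n j)`, that a
vector with entries in `[0, 1]` and total `n j` can have there. These inequalities, together with
the equality of totals, are linear, so they pass from `P` to its convex hull. At the first index
where `p` and `p*` differ, the initial-segment inequality reduces to that single coordinate; at the
last one, so does the reversed inequality on the complementary final segment.
-/

/-- First-order dominance of `p` by `q`: the totals agree, and on every initial segment of the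
index order, encoded as a finset that is a lower set, the sum of `p` is at most that of `q`.
It is the relation of the points of `convexHull ℝ (Pset L n)` to `pstar L n`. -/
def PrefixDominated {ι R : Type*} [Fintype ι] [LE ι] [AddCommMonoid R] [LE R] (p q : ι → R) :
    Prop :=
  ∑ k, p k = ∑ k, q k ∧
    ∀ s : Finset ι, IsLowerSet (s : Set ι) → ∑ k ∈ s, p k ≤ ∑ k ∈ s, q k

namespace PrefixDominated

variable {ι R : Type*} [Fintype ι]

theorem sum [LE ι] [AddCommMonoid R] [Preorder R] [AddLeftMono R] {κ : Type*}
    {t : Finset κ} {p q : κ → ι → R} (h : ∀ j ∈ t, PrefixDominated (p j) (q j)) :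
    PrefixDominated (fun k => ∑ j ∈ t, p j k) (fun k => ∑ j ∈ t, q j k) := by
  refine ⟨?_, fun s hs => ?_⟩
  · rw [sum_comm, sum_comm (f := fun k j => q j k)]
    exact sum_congr rfl fun j hj => (h j hj).1
  · rw [sum_comm, sum_comm (f := fun k j => q j k)]
    exact sum_le_sum fun j hj => (h j hj).2 s hs

theorem add [LE ι] [AddCommMonoid R] [Preorder R] [AddLeftMono R] {p q p' q' : ι → R}
    (h : PrefixDominated p q) (h' : PrefixDominated p' q') :
    PrefixDominated (p + p') (q + q') := by
  refine ⟨?_, fun s hs => ?_⟩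
  · simp only [Pi.add_apply, sum_add_distrib, h.1, h'.1]
  · simp only [Pi.add_apply, sum_add_distrib]
    exact add_le_add (h.2 s hs) (h'.2 s hs)

theorem smul [LE ι] [Semiring R] [Preorder R] [PosMulMono R] {p q : ι → R}
    (h : PrefixDominated p q) {c : R} (hc : 0 ≤ c) : PrefixDominated (c • p) (c • q) := by
  refine ⟨?_, fun s hs => ?_⟩
  · simp only [Pi.smul_apply, smul_eq_mul, ← mul_sum, h.1]
  · simp only [Pi.smul_apply, smul_eq_mul, ← mul_sum]
    exact mul_le_mul_of_nonneg_left (h.2 s hs) hc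

theorem sum_le_sum_of_isUpperSet [LE ι] [AddCommMonoid R] [PartialOrder R]
    [IsOrderedCancelAddMonoid R] {p q : ι → R} (h : PrefixDominated p q) {s : Finset ι}
    (hs : IsUpperSet (s : Set ι)) : ∑ k ∈ s, q k ≤ ∑ k ∈ s, p k := by
  classical
  have hcompl : ∑ k ∈ sᶜ, p k ≤ ∑ k ∈ sᶜ, q k :=
    h.2 _ (by simpa only [coe_compl] using hs.compl)
  refine le_of_add_le_add_right (a := ∑ k ∈ sᶜ, p k) ?_
  calc ∑ k ∈ s, q k + ∑ k ∈ sᶜ, p k ≤ ∑ k ∈ s, q k + ∑ k ∈ sᶜ, q k := by gcongr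
    _ = ∑ k ∈ s, p k + ∑ k ∈ sᶜ, p k := by rw [sum_add_sum_compl, sum_add_sum_compl, h.1]

theorem apply_le_of_forall_lt_eq [PartialOrder ι] [LocallyFiniteOrderBot ι] [AddCommMonoid R]
    [PartialOrder R] [IsOrderedCancelAddMonoid R] {p q : ι → R} (h : PrefixDominated p q) {i : ι}
    (hlt : ∀ k < i, p k = q k) : p i ≤ q i := by
  have hIic : ∑ k ∈ Iic i, p k ≤ ∑ k ∈ Iic i, q k :=
    h.2 _ (by simpa only [coe_Iic] using isLowerSet_Iic i)
  have hIio : ∑ k ∈ Iio i, p k = ∑ k ∈ Iio i, q k :=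
    sum_congr rfl fun k hk => hlt k (mem_Iio.mp hk)
  rwa [← add_sum_Iio_eq_sum_Iic, ← add_sum_Iio_eq_sum_Iic, hIio, add_le_add_iff_right] at hIic

theorem le_apply_of_forall_gt_eq [PartialOrder ι] [LocallyFiniteOrderTop ι] [AddCommMonoid R]
    [PartialOrder R] [IsOrderedCancelAddMonoid R] {p q : ι → R} (h : PrefixDominated p q) {j : ι}
    (hgt : ∀ k, j < k → p k = q k) : q j ≤ p j := by
  have hIci : ∑ k ∈ Ici j, q k ≤ ∑ k ∈ Ici j, p k :=
    h.sum_le_sum_of_isUpperSet (by simpa only [coe_Ici] using isUpperSet_Ici j)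
  have hIoi : ∑ k ∈ Ioi j, p k = ∑ k ∈ Ioi j, q k :=
    sum_congr rfl fun k hk => hgt k (mem_Ioi.mp hk)
  rwa [← add_sum_Ioi_eq_sum_Ici, ← add_sum_Ioi_eq_sum_Ici, hIoi, add_le_add_iff_right] at hIci

end PrefixDominated

theorem convex_setOf_prefixDominated {ι R : Type*} [Fintype ι] [LE ι] [Semiring R]
    [PartialOrder R] [IsOrderedRing R] (q : ι → R) : Convex R {p | PrefixDominated p q} := by
  intro p hp p' hp' a b ha hb hab
  have h := (hp.smul ha).add (hp'.smul hb)
  rwa [Convex.combo_self hab] at h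

theorem prefixDominated_boole_of_isLowerSet {ι R : Type*} [Fintype ι] [LinearOrder ι]
    [Semiring R] [PartialOrder R] [IsOrderedRing R] {P : ι → Prop} [DecidablePred P]
    (hP : IsLowerSet {k | P k}) {e : ι → R}
    (he0 : ∀ k, 0 ≤ e k) (he1 : ∀ k, e k ≤ 1) (hsum : ∑ k, e k = #{k | P k}) :
    PrefixDominated e (fun k => if P k then 1 else 0) := by
  have htotal : ∑ k, e k = ∑ k, if P k then (1 : R) else 0 := by rw [hsum, sum_boole]
  refine ⟨htotal, fun s hs => ?_⟩
  rcases hs.total hP with hsP | hPs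
  · refine sum_le_sum fun k hk => ?_
    have hPk : P k := hsP hk
    rw [if_pos hPk]
    exact he1 k
  · calc ∑ k ∈ s, e k ≤ ∑ k, e k := sum_le_univ_sum_of_nonneg he0
      _ = ∑ k, if P k then 1 else 0 := htotal
      _ = ∑ k ∈ s, if P k then 1 else 0 :=
        (sum_subset (subset_univ s) fun k _ hk => if_neg fun hPk => hk (hPs hPk)).symm

theorem prefixDominated_pstar_of_mem_Pset {L : ℕ} {n : Fin L → ℕ} (hnL : ∀ j, n j ≤ L)
    {p : Fin L → ℝ} (hp : p ∈ Pset L n) : PrefixDominated p (pstar L n) := by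
  obtain ⟨e, he, hsum, rfl⟩ := hp
  have hrow (j : Fin L) : PrefixDominated (e j) (fun k => if (k : ℕ) < n j then 1 else 0) := by
    have hinit : IsLowerSet {k : Fin L | (k : ℕ) < n j} := fun _ _ hle hlt =>
      (Fin.val_le_of_le hle).trans_lt hlt
    refine prefixDominated_boole_of_isLowerSet hinit (fun k => ?_) (fun k => ?_) ?_
    · rcases he j k with h | h <;> simp [h]
    · rcases he j k with h | h <;> simp [h]
    · rw [hsum, Fin.card_filter_val_lt, min_eq_right (hnL j)]
  exact (PrefixDominated.sum fun j _ => hrow j).smul (by positivity)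

theorem prefixDominated_pstar_of_mem_convexHull {L : ℕ} {n : Fin L → ℕ} (hnL : ∀ j, n j ≤ L)
    {p : Fin L → ℝ} (hp : p ∈ convexHull ℝ (Pset L n)) : PrefixDominated p (pstar L n) :=
  convexHull_min (fun _ => prefixDominated_pstar_of_mem_Pset hnL)
    (convex_setOf_prefixDominated (pstar L n)) hp

theorem pstar_first_last_difference (L : ℕ) (hL : 1 ≤ L) (n : Fin L → ℕ)
    (hnL : ∀ j, n j ≤ L) (hne : ∃ j, n j ≠ 0)
    (p : Fin L → ℝ) (hp : p ∈ convexHull ℝ (Pset L n)) (hne' : p ≠ pstar L n)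
    (i j : Fin L)
    (hi : pstar L n i ≠ p i) (himin : ∀ k, k < i → pstar L n k = p k)
    (hj : pstar L n j ≠ p j) (hjmax : ∀ k, j < k → pstar L n k = p k) :
    p i < pstar L n i ∧ pstar L n j < p j := by
  have hdom : PrefixDominated p (pstar L n) := prefixDominated_pstar_of_mem_convexHull hnL hp
  exact ⟨(hdom.apply_le_of_forall_lt_eq fun k hk => (himin k hk).symm).lt_of_ne hi.symm,
    (hdom.le_apply_of_forall_gt_eq fun k hk => (hjmax k hk).symm).lt_of_ne hj⟩
end

section
/- The clumpy distribution p* is an extreme point of the convex set conv(P): if p_1, p_2 ∈ conv(P) satisfy p* = (p_1 + p_2)/2, then p_1 = p_2. -/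
open Finset

/-!
Every prefix sum `p ↦ ∑ i ∈ Iic k, p i` is linear, and over the 0–1 vectors with `m` ones it is
largest when the ones come first. Summing over `j`, the point `p*` maximizes all prefix sums over
`conv(P)` at once. Hence on any open segment of `conv(P)` through `p*` all prefix sums are constant,
and the prefix sums of a vector determine its coordinates.

The maximality already holds over vectors with entries in `[0, 1]`, so `p*` is extreme even in the
convex set `∑ j, (1/M) • hypersimplex (n j)`, which contains `conv(P)`.
-/

open scoped Pointwise

section MaximizingFunctionals

variable {𝕜 E : Type*} [Ring 𝕜] [PartialOrder 𝕜] [AddCommGroup E] [Module 𝕜 E]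

lemma apply_eq_of_mem_openSegment_of_le [IsStrictOrderedRing 𝕜] (f : E →ₗ[𝕜] 𝕜) {x y z : E}
    (hx : x ∈ openSegment 𝕜 y z) (hy : f y ≤ f x) (hz : f z ≤ f x) : f y = f x := by
  obtain ⟨a, b, ha, hb, hab, rfl⟩ := hx
  refine hy.eq_of_not_lt fun hlt ↦ ?_
  have hlt' : a * f y + b * f z < (a + b) * f (a • y + b • z) := by
    rw [add_mul]
    exact add_lt_add_of_lt_of_le (mul_lt_mul_of_pos_left hlt ha)
      (mul_le_mul_of_nonneg_left hz hb.le)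
  simp [hab] at hlt'

lemma mem_extremePoints_of_isMaxOn [IsStrictOrderedRing 𝕜] {κ : Type*} {S : Set E} {x : E}
    (f : κ → E →ₗ[𝕜] 𝕜) (hxS : x ∈ S) (hmax : ∀ k, IsMaxOn (f k) S x)
    (hsep : ∀ y, (∀ k, f k y = f k x) → y = x) :
    x ∈ S.extremePoints 𝕜 :=
  mem_extremePoints_iff_left.2 ⟨hxS, fun y hy _z hz hx ↦ hsep y fun k ↦
    apply_eq_of_mem_openSegment_of_le (f k) hx (hmax k hy) (hmax k hz)⟩

lemma isMaxOn_sum_smul [IsOrderedRing 𝕜] {J : Type*} [Fintype J] (f : E →ₗ[𝕜] 𝕜)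
    {S : J → Set E} {x : J → E} {c : J → 𝕜} (hc : ∀ j, 0 ≤ c j)
    (hmax : ∀ j, IsMaxOn f (S j) (x j)) :
    IsMaxOn f (∑ j, c j • S j) (∑ j, c j • x j) := by
  intro y hy
  obtain ⟨g, hg, rfl⟩ := Set.mem_fintype_sum (fun j ↦ c j • S j) y |>.1 hy
  choose e he hge using hg
  simp only [Set.mem_ofPred_eq, map_sum, ← hge, map_smul, smul_eq_mul]
  exact sum_le_sum fun j _ ↦ mul_le_mul_of_nonneg_left (hmax j (he j)) (hc j)

end MaximizingFunctionals

lemma eq_of_midpoint_mem_extremePoints {𝕜 E : Type*} [Ring 𝕜] [LinearOrder 𝕜]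
    [IsStrictOrderedRing 𝕜] [Invertible (2 : 𝕜)] [AddCommGroup E] [Module 𝕜 E] {S : Set E}
    {y z : E} (hy : y ∈ S) (hz : z ∈ S) (h : midpoint 𝕜 y z ∈ S.extremePoints 𝕜) : y = z :=
  have ⟨hy', hz'⟩ := (mem_extremePoints.1 h).2 y hy z hz (midpoint_mem_openSegment y z)
  hy'.trans hz'.symm

lemma eq_of_sum_Iic_eq {ι M : Type*} [PartialOrder ι] [LocallyFiniteOrderBot ι]
    [WellFoundedLT ι] [AddCommMonoid M] [IsLeftCancelAdd M] {x y : ι → M}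
    (h : ∀ k, ∑ i ∈ Iic k, x i = ∑ i ∈ Iic k, y i) : x = y := by
  funext k
  induction k using WellFoundedLT.induction with
  | ind k ih =>
    have hIio : ∑ i ∈ Iio k, x i = ∑ i ∈ Iio k, y i :=
      sum_congr rfl fun i hi ↦ ih i (mem_Iio.1 hi)
    have hIic := h k
    rwa [← sum_Iio_add_eq_sum_Iic, ← sum_Iio_add_eq_sum_Iic, hIio, add_right_inj] at hIic

/-- The hypersimplex: the points of the cube `[0, 1]^ι` whose coordinates sum to `m`. It relaxes the
0–1 vectors with `m` ones to a convex set, given by inequalities rather than as a convex hull. -/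
def hypersimplex (𝕜 ι : Type*) [Semiring 𝕜] [PartialOrder 𝕜] [Fintype ι] (m : ℕ) :
    Set (ι → 𝕜) :=
  {x | (∀ i, x i ∈ Set.Icc 0 1) ∧ ∑ i, x i = m}

namespace hypersimplex

variable {𝕜 ι : Type*} [Semiring 𝕜] [PartialOrder 𝕜] [IsOrderedRing 𝕜] [Fintype ι]

lemma convex (m : ℕ) : Convex 𝕜 (hypersimplex 𝕜 ι m) := by
  rintro x ⟨hx, hxm⟩ y ⟨hy, hym⟩ a b ha hb hab
  refine ⟨fun i ↦ convex_Icc 0 1 (hx i) (hy i) ha hb hab, ?_⟩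
  simp only [Pi.add_apply, Pi.smul_apply, smul_eq_mul, sum_add_distrib, ← mul_sum, hxm, hym,
    ← add_mul, hab, one_mul]

lemma indicator_mem (t : Finset ι) : (t : Set ι).indicator 1 ∈ hypersimplex 𝕜 ι #t := by
  classical
  refine ⟨fun i ↦ ?_, by simp [Set.indicator_apply]⟩
  by_cases hi : i ∈ t <;> simp [hi]

lemma sum_le_sum_indicator {s t : Finset ι} (hst : s ⊆ t ∨ t ⊆ s) {x : ι → 𝕜}
    (hx : x ∈ hypersimplex 𝕜 ι #t) :
    ∑ i ∈ s, x i ≤ ∑ i ∈ s, (t : Set ι).indicator 1 i := by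
  obtain ⟨hx01, hxsum⟩ := hx
  rcases hst with hst | hts
  · refine sum_le_sum fun i hi ↦ ?_
    simpa [hst hi] using (hx01 i).2
  · calc ∑ i ∈ s, x i ≤ ∑ i, x i :=
          sum_le_univ_sum_of_nonneg fun i ↦ (hx01 i).1
      _ = ∑ i ∈ t, 1 := by simp [hxsum]
      _ = ∑ i ∈ s, (t : Set ι).indicator 1 i := (sum_indicator_subset 1 hts).symm

end hypersimplex

theorem pstar_extreme_point_general {𝕜 ι J : Type*} [Ring 𝕜] [PartialOrder 𝕜]
    [IsStrictOrderedRing 𝕜] [Fintype ι] [LinearOrder ι] [Fintype J] {t : J → Finset ι}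
    (ht : ∀ j, IsLowerSet (t j : Set ι)) {c : J → 𝕜} (hc : ∀ j, 0 ≤ c j) :
    ∑ j, c j • (t j : Set ι).indicator 1 ∈
      (∑ j, c j • hypersimplex 𝕜 ι #(t j)).extremePoints 𝕜 := by
  let := LocallyFiniteOrderBot.ofIic ι (fun k ↦ {i | i ≤ k}) (by simp)
  let prefixSum (k : ι) : (ι → 𝕜) →ₗ[𝕜] 𝕜 := ∑ i ∈ Iic k, LinearMap.proj i
  have prefixSum_apply (k : ι) (x : ι → 𝕜) : prefixSum k x = ∑ i ∈ Iic k, x i := by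
    simp [prefixSum]
  refine mem_extremePoints_of_isMaxOn prefixSum ?_ (fun k ↦ ?_) fun y hy ↦ ?_
  · exact Set.finsetSum_mem_finsetSum _ _ _ fun j _ ↦
      Set.smul_mem_smul_set (hypersimplex.indicator_mem (t j))
  · refine isMaxOn_sum_smul _ hc fun j x hx ↦ ?_
    have hnested : Iic k ⊆ t j ∨ t j ⊆ Iic k := by
      simpa [← coe_subset] using (isLowerSet_Iic k).total (ht j)
    simpa only [Set.mem_ofPred_eq, prefixSum_apply] using
      hypersimplex.sum_le_sum_indicator hnested hx
  · exact eq_of_sum_Iic_eq fun k ↦ by simpa only [prefixSum_apply] using hy k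

section Clumpy

variable {L : ℕ} {n : Fin L → ℕ}

lemma pstar_eq_sum_smul_indicator :
    pstar L n = ∑ j, (1 / (∑ j, n j : ℝ)) •
      (({i | (i : ℕ) < n j} : Finset (Fin L)) : Set (Fin L)).indicator 1 := by
  funext i
  simp only [pstar, mul_sum, Finset.sum_apply, Pi.smul_apply, smul_eq_mul, Set.indicator_apply,
    mem_coe, mem_filter_univ, Pi.one_apply]

lemma pstar_mem_Pset (hnL : ∀ j, n j ≤ L) : pstar L n ∈ Pset L n :=
  ⟨fun j i ↦ if (i : ℕ) < n j then 1 else 0, fun j i ↦ (ite_eq_or_eq _ _ _).symm,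
    fun j ↦ by simp [Fin.card_filter_val_lt, hnL j], rfl⟩

lemma Pset_subset_sum_smul_hypersimplex :
    Pset L n ⊆ ∑ j, (1 / (∑ j, n j : ℝ)) • hypersimplex ℝ (Fin L) (n j) := by
  rintro _ ⟨e, he01, hesum, rfl⟩
  have he (j : Fin L) : e j ∈ hypersimplex ℝ (Fin L) (n j) :=
    ⟨fun i ↦ by rcases he01 j i with h | h <;> simp [h], hesum j⟩
  convert Set.finsetSum_mem_finsetSum univ _ _ fun j _ ↦ Set.smul_mem_smul_set (he j)
  simp [mul_sum]

theorem pstar_mem_extremePoints (hnL : ∀ j, n j ≤ L) :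
    pstar L n ∈ (convexHull ℝ (Pset L n)).extremePoints ℝ := by
  refine inter_extremePoints_subset_extremePoints_of_subset
    (convexHull_min Pset_subset_sum_smul_hypersimplex
      (convex_sum _ fun j _ ↦ (hypersimplex.convex (n j)).smul _))
    ⟨subset_convexHull ℝ _ (pstar_mem_Pset hnL), ?_⟩
  have hcard (j : Fin L) : #{i : Fin L | (i : ℕ) < n j} = n j := by
    simp [Fin.card_filter_val_lt, hnL j]
  have hlower (j : Fin L) :
      IsLowerSet (({i | (i : ℕ) < n j} : Finset (Fin L)) : Set (Fin L)) := by
    intro a b hba ha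
    simp only [coe_filter, mem_univ, true_and, Set.mem_ofPred_eq] at ha ⊢
    exact lt_of_le_of_lt hba ha
  rw [pstar_eq_sum_smul_indicator]
  simpa only [hcard] using pstar_extreme_point_general hlower
    (c := fun _ ↦ 1 / (∑ j, n j : ℝ)) fun _ ↦ by positivity

end Clumpy

theorem pstar_extreme_point (L : ℕ) (hL : 1 ≤ L) (n : Fin L → ℕ)
    (hnL : ∀ j, n j ≤ L) (hne : ∃ j, n j ≠ 0)
    (p₁ p₂ : Fin L → ℝ)
    (hp₁ : p₁ ∈ convexHull ℝ (Pset L n)) (hp₂ : p₂ ∈ convexHull ℝ (Pset L n))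
    (hmid : pstar L n = fun i => (p₁ i + p₂ i) / 2) :
    p₁ = p₂ := by
  have hmidpoint : midpoint ℝ p₁ p₂ = pstar L n := by
    funext i
    simp [hmid, midpoint_eq_smul_add, div_eq_inv_mul]
  exact eq_of_midpoint_mem_extremePoints hp₁ hp₂ (hmidpoint ▸ pstar_mem_extremePoints hnL)
end

section
/- Every p ∈ conv(P) can be written as a convex combination of vectors that are coordinate permutations of p*: there exist finitely many permutations π_1, …, π_r of {1, …, L} and nonnegative reals μ_1, …, μ_r with ∑_l μ_l = 1 such that p = ∑_{l=1}^r μ_l·(p* ∘ π_l), where (p* ∘ π)(i) = p*(π(i)). -/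
open Finset

/-!
Every vector of `P` is a scaled sum of permuted copies of the indicators `e_j*`, so it suffices that
a sum of separately permuted antitone vectors lies in the convex hull of the permutations of the
unpermuted sum. Otherwise a linear functional `f` strictly separates the two. By the rearrangement
inequality, one and the same permutation, read off from the order of the coefficients of `f`,
maximizes `f` over the permutations of each antitone summand, so the sum permuted by it has an
`f`-value at least as large, a contradiction.
-/

section ConvexHull

variable {ι R E : Type*} [Field R] [LinearOrder R] [IsStrictOrderedRing R] [AddCommGroup E]
  [Module R E]

lemma exists_fin_sum_smul_eq_of_mem_convexHull_range {v : ι → E} {x : E}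
    (hx : x ∈ convexHull R (Set.range v)) :
    ∃ (r : ℕ) (g : Fin r → ι) (w : Fin r → R),
      (∀ l, 0 ≤ w l) ∧ ∑ l, w l = 1 ∧ ∑ l, w l • v (g l) = x := by
  obtain ⟨κ, _, w, z, hw_nonneg, hw_sum, hz, rfl⟩ := mem_convexHull_iff_exists_fintype.mp hx
  choose g hg using hz
  let enum := (Fintype.equivFin κ).symm
  refine ⟨Fintype.card κ, g ∘ enum, w ∘ enum, fun l ↦ hw_nonneg (enum l), ?_, ?_⟩
  · simpa only [Function.comp_apply] using (enum.sum_comp w).trans hw_sum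
  · simpa only [Function.comp_apply, hg] using enum.sum_comp fun k ↦ w k • z k

end ConvexHull

section Rearrangement

variable {ι : Type*} [Finite ι] [LinearOrder ι]

lemma exists_perm_antitone_comp {α : Type*} [LinearOrder α] (c : ι → α) :
    ∃ σ : Equiv.Perm ι, Antitone (c ∘ σ) := by
  have := Fintype.ofFinite ι
  let enum := Fintype.orderIsoFinOfCardEq ι rfl
  let σ := Tuple.sort (OrderDual.toDual ∘ c ∘ enum)
  have hσ : Antitone (c ∘ enum ∘ σ) := Tuple.monotone_sort (OrderDual.toDual ∘ c ∘ enum)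
  exact ⟨enum.symm.toEquiv.trans (σ.trans enum.toEquiv), hσ.comp_monotone enum.symm.monotone⟩

lemma exists_perm_forall_antitone_map_comp_le {R M : Type*} [Semiring R] [LinearOrder R]
    [IsStrictOrderedRing R] [ExistsAddOfLE R] [AddCommMonoid M] [LinearOrder M]
    [IsOrderedCancelAddMonoid M] [Module R M] [PosSMulMono R M] (f : (ι → R) →ₗ[R] M) :
    ∃ π : Equiv.Perm ι, ∀ a : ι → R, Antitone a → ∀ ρ : Equiv.Perm ι, f (a ∘ ρ) ≤ f (a ∘ π) := by
  have := Fintype.ofFinite ι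
  let c : ι → M := fun i ↦ f fun k ↦ if i = k then 1 else 0
  have map_comp (a : ι → R) (ρ σ : Equiv.Perm ι) :
      f (a ∘ ρ) = ∑ i, a ((σ.trans ρ) i) • (c ∘ σ) i :=
    (f.pi_apply_eq_sum_univ (a ∘ ρ)).trans (Equiv.sum_comp σ fun i ↦ a (ρ i) • c i).symm
  obtain ⟨σ, hσ⟩ := exists_perm_antitone_comp c
  refine ⟨σ.symm, fun a ha ρ ↦ ?_⟩
  calc
    f (a ∘ ρ) = ∑ i, a ((σ.trans ρ) i) • (c ∘ σ) i := map_comp a ρ σ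
    _ ≤ ∑ i, a i • (c ∘ σ) i := (ha.monovary hσ).sum_comp_perm_smul_le_sum_smul
    _ = f (a ∘ σ.symm) := by simp [map_comp a σ.symm σ]

end Rearrangement

/-- The permutohedron of a vector `a`: the convex hull of all its coordinate permutations.
Coordinates of `a` may coincide. -/
def permutohedron {ι : Type*} (a : ι → ℝ) : Set (ι → ℝ) :=
  convexHull ℝ (Set.range fun π : Equiv.Perm ι ↦ a ∘ π)

open scoped Pointwise in
lemma smul_mem_permutohedron_smul {ι : Type*} {a x : ι → ℝ} (c : ℝ) (hx : x ∈ permutohedron a) :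
    c • x ∈ permutohedron (c • a) := by
  have smul_range : (Set.range fun π : Equiv.Perm ι ↦ (c • a) ∘ π) =
      c • Set.range fun π : Equiv.Perm ι ↦ a ∘ π :=
    Set.range_smul c fun π : Equiv.Perm ι ↦ a ∘ π
  rw [permutohedron, smul_range, convexHull_smul]
  exact Set.smul_mem_smul_set hx

lemma sum_comp_perm_mem_permutohedron {ι κ : Type*} [Finite ι] [LinearOrder ι]
    (s : Finset κ) {a : κ → ι → ℝ} (ha : ∀ j ∈ s, Antitone (a j)) (ρ : κ → Equiv.Perm ι) :
    ∑ j ∈ s, a j ∘ ρ j ∈ permutohedron (∑ j ∈ s, a j) := by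
  by_contra h_notMem
  obtain ⟨f, u, hf_lt, hf_gt⟩ := geometric_hahn_banach_closed_point (convex_convexHull ℝ _)
    ((Set.finite_range _).isClosed_convexHull ℝ) h_notMem
  obtain ⟨π, hπ⟩ := exists_perm_forall_antitone_map_comp_le f.toLinearMap
  have f_comp_lt : f ((∑ j ∈ s, a j) ∘ π) < u := hf_lt _ (subset_convexHull ℝ _ ⟨π, rfl⟩)
  have f_le : f (∑ j ∈ s, a j ∘ ρ j) ≤ f ((∑ j ∈ s, a j) ∘ π) := calc
    f (∑ j ∈ s, a j ∘ ρ j) = ∑ j ∈ s, f (a j ∘ ρ j) := map_sum f _ s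
    _ ≤ ∑ j ∈ s, f (a j ∘ π) := Finset.sum_le_sum fun j hj ↦ hπ (a j) (ha j hj) (ρ j)
    _ = f (∑ j ∈ s, a j ∘ π) := (map_sum f _ s).symm
    _ = f ((∑ j ∈ s, a j) ∘ π) := by congr 1; ext i; simp
  exact (f_comp_lt.trans hf_gt).not_ge f_le

lemma exists_perm_eq_comp_of_sum_eq {ι R : Type*} [Fintype ι] [NonAssocSemiring R] [CharZero R]
    {e e' : ι → R} (he : ∀ i, e i = 0 ∨ e i = 1) (he' : ∀ i, e' i = 0 ∨ e' i = 1)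
    (h_sum : ∑ i, e i = ∑ i, e' i) : ∃ ρ : Equiv.Perm ι, e = e' ∘ ρ := by
  classical
  have sum_eq_card {g : ι → R} (hg : ∀ i, g i = 0 ∨ g i = 1) :
      ∑ i, g i = (Fintype.card {i // g i = 1} : R) := by
    have eq_ite (i : ι) : g i = if g i = 1 then 1 else 0 := by rcases hg i with h | h <;> simp [h]
    rw [Fintype.card_subtype, ← Finset.sum_boole, ← Finset.sum_congr rfl fun i _ ↦ eq_ite i]
  have card_eq : Fintype.card {i // e i = 1} = Fintype.card {i // e' i = 1} := by
    rwa [sum_eq_card he, sum_eq_card he', Nat.cast_inj] at h_sum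
  let ones := Fintype.equivOfCardEq card_eq
  refine ⟨ones.extendSubtype, funext fun i ↦ ?_⟩
  by_cases h : e i = 1
  · exact h.trans (ones.extendSubtype_mem i h).symm
  · exact ((he i).resolve_right h).trans
      ((he' _).resolve_right (ones.extendSubtype_not_mem i h)).symm

/-- The 0–1 vector `e*` whose first `k` coordinates are 1, as a function on `Fin L`;
it is constantly 1 if `L ≤ k`. -/
def initialIndicator (L k : ℕ) : Fin L → ℝ := fun i ↦ if (i : ℕ) < k then 1 else 0

lemma initialIndicator_eq_zero_or_one {L : ℕ} (k : ℕ) (i : Fin L) :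
    initialIndicator L k i = 0 ∨ initialIndicator L k i = 1 :=
  (ite_eq_or_eq _ _ _).symm

lemma antitone_initialIndicator (L k : ℕ) : Antitone (initialIndicator L k) := by
  intro i i' hii'
  have : (i : ℕ) ≤ i' := hii'
  unfold initialIndicator
  split_ifs <;> first | omega | norm_num

lemma sum_initialIndicator {L k : ℕ} (hk : k ≤ L) : ∑ i, initialIndicator L k i = k := by
  simp only [initialIndicator, Finset.sum_boole, Fin.card_filter_val_lt, min_eq_right hk]

lemma sum_mem_permutohedron_sum_initialIndicator {L : ℕ} {κ : Type*} [Fintype κ] {n : κ → ℕ}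
    (hnL : ∀ j, n j ≤ L) {e : κ → Fin L → ℝ} (he : ∀ j i, e j i = 0 ∨ e j i = 1)
    (he_sum : ∀ j, ∑ i, e j i = n j) :
    ∑ j, e j ∈ permutohedron (∑ j, initialIndicator L (n j)) := by
  have exists_perm (j : κ) : ∃ ρ : Equiv.Perm (Fin L), e j = initialIndicator L (n j) ∘ ρ :=
    exists_perm_eq_comp_of_sum_eq (he j) (initialIndicator_eq_zero_or_one (n j))
      ((he_sum j).trans (sum_initialIndicator (hnL j)).symm)
  choose ρ hρ using exists_perm
  simp only [hρ]
  exact sum_comp_perm_mem_permutohedron univ (fun j _ ↦ antitone_initialIndicator L (n j)) ρ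

lemma pstar_eq_smul_sum_initialIndicator (L : ℕ) (n : Fin L → ℕ) :
    pstar L n = (1 / (∑ j, n j : ℝ)) • ∑ j, initialIndicator L (n j) := by
  ext i
  simp only [pstar, initialIndicator, Pi.smul_apply, Finset.sum_apply, smul_eq_mul]

lemma Pset_subset_permutohedron_pstar {L : ℕ} (n : Fin L → ℕ) (hnL : ∀ j, n j ≤ L) :
    Pset L n ⊆ permutohedron (pstar L n) := by
  rintro _ ⟨e, he, he_sum, rfl⟩
  have smul_sum_eq : (fun i ↦ (1 / (∑ j, n j : ℝ)) * ∑ j, e j i) =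
      (1 / (∑ j, n j : ℝ)) • ∑ j, e j := by
    ext i
    simp only [Pi.smul_apply, Finset.sum_apply, smul_eq_mul]
  rw [smul_sum_eq, pstar_eq_smul_sum_initialIndicator]
  exact smul_mem_permutohedron_smul _
    (sum_mem_permutohedron_sum_initialIndicator hnL he he_sum)

theorem convexHull_eq_convex_comb_of_permuted_pstar (L : ℕ) (hL : 1 ≤ L)
    (n : Fin L → ℕ) (hnL : ∀ j, n j ≤ L) (hne : ∃ j, n j ≠ 0)
    (p : Fin L → ℝ) (hp : p ∈ convexHull ℝ (Pset L n)) :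
    ∃ (r : ℕ) (π : Fin r → Equiv.Perm (Fin L)) (μ : Fin r → ℝ),
      (∀ l, 0 ≤ μ l) ∧ (∑ l, μ l) = 1 ∧
      ∀ i, p i = ∑ l, μ l * pstar L n (π l i) := by
  have p_mem : p ∈ permutohedron (pstar L n) :=
    convexHull_min (Pset_subset_permutohedron_pstar n hnL) (convex_convexHull ℝ _) hp
  obtain ⟨r, π, μ, hμ_nonneg, hμ_sum, rfl⟩ := exists_fin_sum_smul_eq_of_mem_convexHull_range p_mem
  exact ⟨r, π, μ, hμ_nonneg, hμ_sum, fun i ↦ by simp⟩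
end

section
/- For every real ε > 0 and every integer z ≥ 2, there exists K such that for all integers k ≥ K the following holds: if (p_n)_{n≥1} is a probability mass function on the positive integers with finite mean satisfying p_n ≤ (3/8)^k · z^{2n} for every n ≥ 1, then its entropy in bits H(p) = −∑_{n≥1} p_n·log₂ p_n satisfies H(p) ≤ ε · ∑_{n≥1} n·p_n. -/
open Filter

/-!
Gibbs' inequality bounds the entropy in nats of a distribution `p` by
`∑ f n * p n + log ∑ exp (-f n)` for every `f` for which both sums converge. The choice
`f n = t * n` gives `t * M + L`, where `M` is the mean of `p` and the constant `L` depends on `t`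
only. If `p n ≤ c k n` with `c k n → 0` as `k` grows, then the mass of `p` below any fixed `m` is
eventually at most `1 / 2`, so that `M ≥ m / 2` by Markov's inequality; once `m` is large enough,
`L` is absorbed into a second copy of `t * M`.
-/

open scoped Topology

section Gibbs

open Real

theorem negMulLog_le_mul_sub_add_exp_neg {x : ℝ} (hx : 0 ≤ x) (t : ℝ) :
    negMulLog x ≤ t * x - x + exp (-t) := by
  have hneg : negMulLog (exp t) = -(exp t * t) := by rw [negMulLog, log_exp, neg_mul]
  have hexp : exp t * exp (-t) = 1 := by rw [← exp_add, add_neg_cancel, exp_zero]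
  have h := negMulLog_le_one_sub_self (mul_nonneg hx (exp_pos t).le)
  rw [negMulLog_mul, hneg] at h
  exact le_of_mul_le_mul_left (by linarith) (exp_pos t)

variable {ι : Type*} {p f : ι → ℝ}

theorem summable_negMulLog (hp : ∀ i, 0 ≤ p i) (hp_le : ∀ i, p i ≤ 1)
    (hfp : Summable fun i ↦ f i * p i) (hf : Summable fun i ↦ exp (-f i)) :
    Summable fun i ↦ negMulLog (p i) :=
  (hfp.add hf).of_nonneg_of_le (fun i ↦ negMulLog_nonneg (hp i) (hp_le i)) fun i ↦ by
    linarith [negMulLog_le_mul_sub_add_exp_neg (hp i) (f i), hp i]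

theorem tsum_negMulLog_le_tsum_mul_add_log_tsum_exp_neg (hp : ∀ i, 0 ≤ p i) (hp_sum : HasSum p 1)
    (hfp : Summable fun i ↦ f i * p i) (hf : Summable fun i ↦ exp (-f i)) :
    ∑' i, negMulLog (p i) ≤ ∑' i, f i * p i + log (∑' i, exp (-f i)) := by
  set Z := ∑' i, exp (-f i)
  have hZ : 0 < Z := by
    obtain ⟨i⟩ : Nonempty ι :=
      not_isEmpty_iff.1 fun _ ↦ one_ne_zero (hp_sum.unique hasSum_empty)
    exact hf.tsum_pos (fun _ ↦ (exp_pos _).le) i (exp_pos _)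
  have hp_le : ∀ i, p i ≤ 1 := fun i ↦ le_hasSum hp_sum i fun j _ ↦ hp j
  -- Shifting `f` by `log Z` normalizes `exp (-f)` to a probability distribution.
  have hpoint : ∀ i, negMulLog (p i) ≤ f i * p i + (log Z - 1) * p i + exp (-f i) / Z := fun i ↦ by
    have h := negMulLog_le_mul_sub_add_exp_neg (hp i) (f i + log Z)
    rw [neg_add, exp_add, exp_neg (log Z), exp_log hZ, ← div_eq_mul_inv] at h
    linarith
  have hbound : HasSum (fun i ↦ f i * p i + (log Z - 1) * p i + exp (-f i) / Z)
      (∑' i, f i * p i + (log Z - 1) * 1 + Z / Z) :=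
    (hfp.hasSum.add (hp_sum.mul_left _)).add (hf.hasSum.div_const Z)
  calc ∑' i, negMulLog (p i)
      ≤ ∑' i, f i * p i + (log Z - 1) * 1 + Z / Z :=
        hasSum_le hpoint (summable_negMulLog hp hp_le hfp hf).hasSum hbound
    _ = ∑' i, f i * p i + log Z := by rw [div_self hZ.ne']; ring

theorem neg_tsum_mul_logb_eq_tsum_negMulLog_div (b : ℝ) (p : ι → ℝ) :
    -∑' i, p i * logb b (p i) = (∑' i, negMulLog (p i)) / log b := by
  rw [← tsum_neg, ← tsum_div_const]
  exact tsum_congr fun i ↦ by rw [logb, negMulLog]; ring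

end Gibbs

theorem mul_tsum_sub_sum_le_tsum_mul {ι : Type*} {p w : ι → ℝ} {c : ℝ} {s : Finset ι}
    (hp : ∀ i, 0 ≤ p i) (hw : ∀ i ∈ s, 0 ≤ w i) (hcw : ∀ i ∉ s, c ≤ w i)
    (hp_sum : Summable p) (hwp : Summable fun i ↦ w i * p i) :
    c * (∑' i, p i - ∑ i ∈ s, p i) ≤ ∑' i, w i * p i := by
  rw [← hp_sum.sum_add_tsum_compl (s := s), add_sub_cancel_left, ← tsum_mul_left]
  calc ∑' i : ↥(s : Set ι)ᶜ, c * p i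
      ≤ ∑' i : ↥(s : Set ι)ᶜ, w i * p i :=
        ((hp_sum.subtype _).mul_left c).tsum_le_tsum
          (fun i ↦ mul_le_mul_of_nonneg_right (hcw i i.2) (hp i)) (hwp.subtype _)
    _ ≤ ∑ i ∈ s, w i * p i + ∑' i : ↥(s : Set ι)ᶜ, w i * p i :=
        le_add_of_nonneg_left (Finset.sum_nonneg fun i hi ↦ mul_nonneg (hw i hi) (hp i))
    _ = ∑' i, w i * p i := hwp.sum_add_tsum_compl

theorem exists_tsum_negMulLog_le_of_sum_range_le_half {ε : ℝ} (hε : 0 < ε) :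
    ∃ m : ℕ, ∀ p : ℕ → ℝ, (∀ n, 0 ≤ p n) → HasSum p 1 → Summable (fun n : ℕ ↦ (n : ℝ) * p n) →
      ∑ n ∈ Finset.range m, p n ≤ 1 / 2 →
      ∑' n, Real.negMulLog (p n) ≤ ε * ∑' n : ℕ, (n : ℝ) * p n := by
  set L := Real.log (∑' n : ℕ, Real.exp (-(ε / 2 * n)))
  obtain ⟨m, hm⟩ := exists_nat_ge (4 * L / ε)
  refine ⟨m, fun p hp hp_sum hmean hhead ↦ ?_⟩
  set M := ∑' n : ℕ, (n : ℝ) * p n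
  have hmM : (m : ℝ) / 2 ≤ M := calc
    (m : ℝ) / 2 ≤ m * (∑' n, p n - ∑ n ∈ Finset.range m, p n) := by
      rw [hp_sum.tsum_eq, div_eq_mul_one_div]
      exact mul_le_mul_of_nonneg_left (by linarith) m.cast_nonneg
    _ ≤ M := mul_tsum_sub_sum_le_tsum_mul hp (fun n _ ↦ n.cast_nonneg)
      (fun n hn ↦ Nat.cast_le.2 (by simpa using hn)) hp_sum.summable hmean
  have hLM : L ≤ ε / 2 * M := by
    rw [div_le_iff₀ hε] at hm
    nlinarith
  have hexp : Summable fun n : ℕ ↦ Real.exp (-(ε / 2 * n)) := by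
    simpa only [neg_mul_eq_mul_neg, mul_comm] using
      Real.summable_exp_nat_mul_iff.2 (neg_lt_zero.2 (half_pos hε))
  have hfp : HasSum (fun n : ℕ ↦ ε / 2 * n * p n) (ε / 2 * M) := by
    simpa only [mul_assoc] using hmean.hasSum.mul_left (ε / 2)
  calc ∑' n, Real.negMulLog (p n)
      ≤ ∑' n : ℕ, ε / 2 * n * p n + L :=
        tsum_negMulLog_le_tsum_mul_add_log_tsum_exp_neg hp hp_sum hfp.summable hexp
    _ ≤ ε / 2 * M + ε / 2 * M := by rw [hfp.tsum_eq]; gcongr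
    _ = ε * M := by ring

theorem entropy_le_eps_mean_general {κ : Type*} {l : Filter κ} {c : κ → ℕ → ℝ}
    (hc : ∀ n, Tendsto (fun k ↦ c k n) l (𝓝 0)) {ε : ℝ} (hε : 0 < ε) :
    ∀ᶠ k in l, ∀ p : ℕ → ℝ,
      (∀ n, 0 ≤ p n) → HasSum p 1 → Summable (fun n : ℕ ↦ (n : ℝ) * p n) →
      (∀ n, p n ≤ c k n) →
      (-∑' n, p n * Real.logb 2 (p n)) ≤ ε * ∑' n : ℕ, (n : ℝ) * p n := by
  have hlog : 0 < Real.log 2 := Real.log_pos one_lt_two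
  obtain ⟨m, hm⟩ := exists_tsum_negMulLog_le_of_sum_range_le_half (mul_pos hε hlog)
  have hhead : Tendsto (fun k ↦ ∑ n ∈ Finset.range m, c k n) l (𝓝 0) := by
    simpa using tendsto_finsetSum (Finset.range m) fun n _ ↦ hc n
  filter_upwards [hhead.eventually_le_const one_half_pos] with k hk p hp hp_sum hmean hpc
  rw [neg_tsum_mul_logb_eq_tsum_negMulLog_div, div_le_iff₀ hlog, mul_right_comm]
  exact hm p hp hp_sum hmean ((Finset.sum_le_sum fun n _ ↦ hpc n).trans hk)

theorem entropy_le_eps_mean (ε : ℝ) (hε : 0 < ε) (z : ℕ) (hz : 2 ≤ z) :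
    ∃ K : ℕ, ∀ k : ℕ, K ≤ k →
      ∀ p : ℕ → ℝ,
        (∀ n : ℕ, 0 ≤ p n) → p 0 = 0 → Summable p → (∑' n : ℕ, p n) = 1 →
        Summable (fun n : ℕ => (n : ℝ) * p n) →
        (∀ n : ℕ, 1 ≤ n → p n ≤ (3 / 8 : ℝ) ^ k * (z : ℝ) ^ (2 * n)) →
        (-∑' n : ℕ, p n * Real.logb 2 (p n)) ≤ ε * ∑' n : ℕ, (n : ℝ) * p n := by
  have hdecay (n : ℕ) : Tendsto (fun k : ℕ ↦ (3 / 8 : ℝ) ^ k * (z : ℝ) ^ (2 * n)) atTop (𝓝 0) := by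
    simpa using (tendsto_pow_atTop_nhds_zero_of_lt_one (r := (3 / 8 : ℝ))
      (by norm_num) (by norm_num)).mul_const _
  obtain ⟨K, hK⟩ := eventually_atTop.1 (entropy_le_eps_mean_general hdecay hε)
  refine ⟨K, fun k hk p hp hp0 hps hp1 hmean hpc ↦
    hK k hk p hp (hp1 ▸ hps.hasSum) hmean fun n ↦ ?_⟩
  obtain rfl | hn := n.eq_zero_or_pos
  · rw [hp0]; positivity
  · exact hpc n hn
end

section
/- Let k ≥ 1 be an integer, let σ ∈ {0,1,2,3}^k, and set x = #{i : σ(i) = 1}, y = #{i : σ(i) = 2}. For each integer u with 0 ≤ u ≤ x + y, the number of vectors x₃ ∈ {0,1}^k that are compatible with σ (i.e., σ(i) − x₃(i) ∈ {0,1,2} for all i) and whose x₃-partition has size exactly 2^{x+y−u} (i.e., exactly 2^{x+y−u} pairs (x₁, x₂) ∈ ({0,1}^k)² satisfy x₁ + x₂ + x₃ = σ componentwise) equals the binomial coefficient C(x+y, u). -/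
open Finset

/-!
The residue `σ i - x₃ i` is a sum of two bits in `C(2, σ i - x₃ i)` ways, that is, in two ways if it
is `1` and in one way if it is `0` or `2`. So the `x₃`-partition has `2 ^ #D` pairs, where `D` is
the set of coordinates of residue `1`. Where `σ i ∈ {0, 3}`, compatibility forces `x₃ i` and the
residue is even; where `σ i ∈ {1, 2}`, both bits are allowed and exactly one of them leaves residue
`1`. Hence `x₃ ↦ D` is a bijection from the compatible vectors onto the subsets of
`{i | σ i ∈ {1, 2}}`, and the compatible vectors with `2 ^ m` pairs correspond to the subsets of
size `m`.
-/

/-- Compatibility of a vector with `σ` at a single coordinate, where `σ` has entry `s` and the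
vector has entry `t`. It is an `abbrev` so that its decidability is inferred. -/
abbrev CompatibleAt (s : Fin 4) (t : Fin 2) : Prop :=
  (s : ℤ) - (t : ℤ) = 0 ∨ (s : ℤ) - (t : ℤ) = 1 ∨ (s : ℤ) - (t : ℤ) = 2

variable {ι : Type*} [Fintype ι]

/-- The set of coordinates at which `σ - x` equals `1`; these are the coordinates at which an
`x`-partition has a choice. -/
def unitResidue (σ : ι → Fin 4) (x : ι → Fin 2) : Finset ι :=
  {i | (σ i : ℕ) = x i + 1}

theorem card_bit_pairs_add_eq (m : ℕ) :
    Fintype.card {p : Fin 2 × Fin 2 // (p.1 : ℕ) + p.2 = m} = Nat.choose 2 m := by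
  obtain hm | hm := le_or_gt m 2
  · interval_cases m <;> decide
  · rw [Nat.choose_eq_zero_of_lt hm, Fintype.card_eq_zero_iff]
    exact ⟨fun p ↦ by omega⟩

theorem card_bit_vector_pairs_add_eq [DecidableEq ι] (r : ι → ℕ) :
    Fintype.card {p : (ι → Fin 2) × (ι → Fin 2) // ∀ i, (p.1 i : ℕ) + p.2 i = r i} =
      ∏ i, Nat.choose 2 (r i) := by
  let e : {p : (ι → Fin 2) × (ι → Fin 2) // ∀ i, (p.1 i : ℕ) + p.2 i = r i} ≃
      ∀ i, {p : Fin 2 × Fin 2 // (p.1 : ℕ) + p.2 = r i} :=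
    ((Equiv.arrowProdEquivProdArrow ι (fun _ ↦ Fin 2) fun _ ↦ Fin 2).symm.subtypeEquiv
      fun _ ↦ Iff.rfl).trans
        (Equiv.subtypePiEquivPi (p := fun i (p : Fin 2 × Fin 2) ↦ (p.1 : ℕ) + p.2 = r i))
  simp only [Fintype.card_congr e, Fintype.card_pi, card_bit_pairs_add_eq]

theorem prod_choose_two_eq_two_pow {r : ι → ℕ} (hr : ∀ i, r i ≤ 2) :
    ∏ i, Nat.choose 2 (r i) = 2 ^ #{i | r i = 1} := by
  have choose_two (i : ι) : Nat.choose 2 (r i) = if r i = 1 then 2 else 1 := by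
    have := hr i
    interval_cases r i <;> rfl
  simp only [choose_two, prod_ite, prod_const, one_pow, mul_one]

theorem card_partition_eq_two_pow [DecidableEq ι] {σ : ι → Fin 4} {x : ι → Fin 2}
    (h : ∀ i, CompatibleAt (σ i) (x i)) :
    Fintype.card {p : (ι → Fin 2) × (ι → Fin 2) //
        ∀ i, (p.1 i : ℕ) + (p.2 i : ℕ) + (x i : ℕ) = (σ i : ℕ)} =
      2 ^ #(unitResidue σ x) := by
  have hle (i : ι) : (x i : ℕ) ≤ σ i := by have := h i; omega
  have hr (i : ι) : (σ i : ℕ) - x i ≤ 2 := by have := h i; omega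
  simp only [← eq_tsub_iff_add_eq_of_le (hle _), card_bit_vector_pairs_add_eq,
    prod_choose_two_eq_two_pow hr, unitResidue, tsub_eq_iff_eq_add_of_le (hle _), add_comm 1]

theorem unitResidue_subset (σ : ι → Fin 4) (x : ι → Fin 2) :
    unitResidue σ x ⊆ ({i | σ i = 1 ∨ σ i = 2} : Finset ι) :=
  monotone_filter_right univ fun i _ hi ↦ by omega

theorem existsUnique_compatibleAt {s : Fin 4} {b : Prop} (hb : b → s = 1 ∨ s = 2) :
    ∃! t : Fin 2, CompatibleAt s t ∧ ((s : ℕ) = t + 1 ↔ b) := by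
  by_cases h : b
  · simp only [h, iff_true, ExistsUnique]
    obtain rfl | rfl := hb h <;> decide
  · simp only [h, iff_false, ExistsUnique]
    clear hb
    decide +revert

theorem existsUnique_compatible_unitResidue_eq {σ : ι → Fin 4} {T : Finset ι}
    (hT : T ⊆ ({i | σ i = 1 ∨ σ i = 2} : Finset ι)) :
    ∃! x : ι → Fin 2, (∀ i, CompatibleAt (σ i) (x i)) ∧ unitResidue σ x = T := by
  obtain ⟨f, hf⟩ := forall_existsUnique_iff.1 fun i ↦ existsUnique_compatibleAt fun hi ↦
    (mem_filter_univ i).1 (@hT i hi)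
  have eq_iff (x : ι → Fin 2) :
      (∀ i, CompatibleAt (σ i) (x i)) ∧ unitResidue σ x = T ↔ x = f := by
    simp only [Finset.ext_iff, unitResidue, mem_filter_univ, ← forall_and, hf, funext_iff,
      eq_comm (b := f _)]
  simp only [eq_iff, existsUnique_eq]

theorem card_compatible_of_card_unitResidue [DecidableEq ι] (σ : ι → Fin 4) (m : ℕ) :
    #{x : ι → Fin 2 | (∀ i, CompatibleAt (σ i) (x i)) ∧ #(unitResidue σ x) = m} =
      (#{i | σ i = 1 ∨ σ i = 2}).choose m := by
  rw [← card_powersetCard]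
  refine card_nbij (unitResidue σ) (fun x hx ↦ ?_) (fun x hx y hy hxy ↦ ?_) fun T hT ↦ ?_
  · exact mem_powersetCard.2 ⟨unitResidue_subset σ x, ((mem_filter_univ x).1 hx).2⟩
  · exact (existsUnique_compatible_unitResidue_eq (unitResidue_subset σ y)).unique
      ⟨((mem_filter_univ x).1 hx).1, hxy⟩ ⟨((mem_filter_univ y).1 hy).1, rfl⟩
  · obtain ⟨hTσ, hTm⟩ := mem_powersetCard.1 hT
    obtain ⟨x, hx, rfl⟩ := (existsUnique_compatible_unitResidue_eq hTσ).exists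
    exact ⟨x, (mem_filter_univ x).2 ⟨hx, hTm⟩, rfl⟩

theorem card_partitions_of_size_general [DecidableEq ι] (σ : ι → Fin 4) (m : ℕ) :
    Fintype.card {x : ι → Fin 2 // (∀ i, CompatibleAt (σ i) (x i)) ∧
        Fintype.card {p : (ι → Fin 2) × (ι → Fin 2) //
          ∀ i, (p.1 i : ℕ) + (p.2 i : ℕ) + (x i : ℕ) = (σ i : ℕ)} = 2 ^ m} =
      (#{i | σ i = 1} + #{i | σ i = 2}).choose m := by
  have hdisj : Disjoint ({i | σ i = 1} : Finset ι) ({i | σ i = 2} : Finset ι) :=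
    disjoint_filter.2 fun _ _ h₁ h₂ ↦ absurd (h₁.symm.trans h₂) (by decide)
  rw [← card_union_of_disjoint hdisj, ← filter_or, ← card_compatible_of_card_unitResidue,
    Fintype.card_subtype]
  refine congrArg card (filter_congr fun x _ ↦ and_congr_right fun hx ↦ ?_)
  rw [card_partition_eq_two_pow hx, Nat.pow_right_inj one_lt_two]

theorem card_partitions_of_size (k : ℕ) (hk : 1 ≤ k) (σ : Fin k → Fin 4) (u : ℕ)
    (hu : u ≤ (Finset.univ.filter (fun i => σ i = 1)).card +
              (Finset.univ.filter (fun i => σ i = 2)).card) :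
    Fintype.card
      {x₃ : Fin k → Fin 2 //
        (∀ i, (σ i : ℤ) - (x₃ i : ℤ) = 0 ∨ (σ i : ℤ) - (x₃ i : ℤ) = 1 ∨
          (σ i : ℤ) - (x₃ i : ℤ) = 2) ∧
        Fintype.card
            {pr : (Fin k → Fin 2) × (Fin k → Fin 2) //
              ∀ i, ((pr.1 i : ℕ) + (pr.2 i : ℕ) + (x₃ i : ℕ)) = (σ i : ℕ)} =
          2 ^ ((Finset.univ.filter (fun i => σ i = 1)).card +
               (Finset.univ.filter (fun i => σ i = 2)).card - u)} =
    ((Finset.univ.filter (fun i => σ i = 1)).card +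
     (Finset.univ.filter (fun i => σ i = 2)).card).choose u := by
  rw [← Nat.choose_symm hu]
  -- `convert`: here `∀ i : Fin k, _` is decided by `Nat.decidableForallFin`.
  convert card_partitions_of_size_general σ _
end
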